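/- arXiv:2207.04387 — 4 statements merged into one kernel-verified Lean document; each statement's English description precedes it below -/
import Mathlib

section
/- Let ρ > 0, let ψ : ℝ^d → ℝ be differentiable and ρ-strongly convex, let L ≥ 0, let g : ℝ^d → ℝ be L-Lipschitz, let f : ℝ^d → ℝ be measurable, and let λ > 0. Set U := f + g and U_λ := f + env_{λ,g}^ψ, where env_{λ,g}^ψ denotes either the left or the right Bregman–Moreau envelope of g. If 0 < ∫_{ℝ^d} e^{−U(x)} dx < ∞, then ∫_{ℝ^d} e^{−U(x)} dx ≤ ∫_{ℝ^d} e^{−U_λ(x)} dx ≤ e^{λL²/(2ρ)} · ∫_{ℝ^d} e^{−U(x)} dx < ∞; in particular e^{−U_λ} is Lebesgue-integrable. -/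
open scoped RealInnerProductSpace ENNReal
open MeasureTheory

/-- The Bregman divergence associated with a differentiable function `ψ`. -/
noncomputable def bregmanDiv {d : ℕ} (ψ : EuclideanSpace ℝ (Fin d) → ℝ)
    (x y : EuclideanSpace ℝ (Fin d)) : ℝ :=
  ψ x - ψ y - ⟪gradient ψ y, x - y⟫

/-- The left Bregman–Moreau envelope of `g` associated with `ψ`. -/
noncomputable def leftEnv {d : ℕ} (ψ g : EuclideanSpace ℝ (Fin d) → ℝ) (lam : ℝ)
    (x : EuclideanSpace ℝ (Fin d)) : ℝ :=
  ⨅ y : EuclideanSpace ℝ (Fin d), (g y + (1 / lam) * bregmanDiv ψ y x)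

/-- The right Bregman–Moreau envelope of `g` associated with `ψ`. -/
noncomputable def rightEnv {d : ℕ} (ψ g : EuclideanSpace ℝ (Fin d) → ℝ) (lam : ℝ)
    (x : EuclideanSpace ℝ (Fin d)) : ℝ :=
  ⨅ y : EuclideanSpace ℝ (Fin d), (g y + (1 / lam) * bregmanDiv ψ x y)

/-!
Taking `y = x` in the infimum gives `env ≤ g`. Conversely, strong convexity gives
`D_ψ x y ≥ ρ / 2 * ‖x - y‖ ^ 2`, and trading this quadratic gain against the linear loss
`L * ‖x - y‖` in `g` by Young's inequality gives `g - λ * L ^ 2 / (2 * ρ) ≤ env`. Exponentiating and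
integrating this pinching yields the bounds. The envelope is an uncountable infimum, so its
measurability needs an argument: the right envelope is an infimum of continuous functions, hence
upper semicontinuous; for the left one the objective is continuous in the index `y`, so the infimum
can be restricted to a countable dense set.
-/

open scoped NNReal

/-- The Moreau envelope of `g` for a cost `D`. Both Bregman–Moreau envelopes are instances: the
right one for `D = bregmanDiv ψ`, the left one for `bregmanDiv ψ` with its arguments exchanged. The
infimum is taken in `ℝ`, so the value is `0` where the objective is unbounded below. -/
noncomputable def moreauEnv {E : Type*} (D : E → E → ℝ) (g : E → ℝ) (lam : ℝ) (x : E) : ℝ :=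
  ⨅ y, (g y + (1 / lam) * D x y)

section Bounds

variable {E : Type*} {D : E → E → ℝ} {g : E → ℝ} {lam : ℝ}

lemma moreauEnv_le_self {x : E} (hbdd : BddBelow (Set.range fun y => g y + (1 / lam) * D x y))
    (hD : D x x = 0) : moreauEnv D g lam x ≤ g x :=
  (ciInf_le hbdd x).trans_eq (by simp only [hD, mul_zero, add_zero])

variable [PseudoMetricSpace E] {L : ℝ≥0} {ρ : ℝ}

lemma sub_le_add_one_div_mul_of_lipschitzWith (hρ : 0 < ρ) (hlam : 0 < lam) (hg : LipschitzWith L g)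
    {x y : E} (hD : ρ / 2 * dist x y ^ 2 ≤ D x y) :
    g x - lam * L ^ 2 / (2 * ρ) ≤ g y + (1 / lam) * D x y := by
  have young : L * dist x y ≤ (1 / lam) * (ρ / 2 * dist x y ^ 2) + lam * L ^ 2 / (2 * ρ) := by
    have hsq : 0 ≤ (ρ * dist x y - lam * L) ^ 2 / (2 * ρ * lam) := by positivity
    have hexpand : (ρ * dist x y - lam * L) ^ 2 / (2 * ρ * lam) =
        (1 / lam) * (ρ / 2 * dist x y ^ 2) + lam * L ^ 2 / (2 * ρ) - L * dist x y := by
      field_simp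
      ring
    linarith
  calc g x - lam * L ^ 2 / (2 * ρ)
      ≤ g y + L * dist x y - lam * L ^ 2 / (2 * ρ) := by gcongr; exact hg.le_add_mul x y
    _ ≤ g y + (1 / lam) * (ρ / 2 * dist x y ^ 2) := by linarith
    _ ≤ g y + (1 / lam) * D x y := by gcongr

lemma bddBelow_range_add_one_div_mul (hρ : 0 < ρ) (hlam : 0 < lam) (hg : LipschitzWith L g) {x : E}
    (hD : ∀ y, ρ / 2 * dist x y ^ 2 ≤ D x y) :
    BddBelow (Set.range fun y => g y + (1 / lam) * D x y) :=
  ⟨_, Set.forall_mem_range.2 fun y => sub_le_add_one_div_mul_of_lipschitzWith hρ hlam hg (hD y)⟩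

lemma sub_le_moreauEnv (hρ : 0 < ρ) (hlam : 0 < lam) (hg : LipschitzWith L g) {x : E}
    (hD : ∀ y, ρ / 2 * dist x y ^ 2 ≤ D x y) :
    g x - lam * L ^ 2 / (2 * ρ) ≤ moreauEnv D g lam x :=
  haveI : Nonempty E := ⟨x⟩
  le_ciInf fun y => sub_le_add_one_div_mul_of_lipschitzWith hρ hlam hg (hD y)

end Bounds

section Measurability

lemma measurable_ciInf_of_continuous {α ι : Type*} [MeasurableSpace α] [TopologicalSpace ι]
    [TopologicalSpace.SeparableSpace ι] {F : ι → α → ℝ} (hmeas : ∀ i, Measurable (F i))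
    (hcont : ∀ a, Continuous fun i => F i a) : Measurable fun a => ⨅ i, F i a := by
  obtain ⟨s, hs, hdense⟩ := TopologicalSpace.exists_countable_dense ι
  have := hs.to_subtype
  simp_rw [← fun a => hdense.ciInf' (hcont a)]
  exact Measurable.iInf fun i : s => hmeas i

variable {E : Type*} [TopologicalSpace E] {D : E → E → ℝ} {g : E → ℝ} {lam : ℝ}

lemma measurable_moreauEnv [TopologicalSpace.SeparableSpace E] [MeasurableSpace E]
    (hg : Continuous g) (hmeas : ∀ y, Measurable fun x => D x y) (hcont : ∀ x, Continuous (D x)) :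
    Measurable (moreauEnv D g lam) :=
  measurable_ciInf_of_continuous (fun y => ((hmeas y).const_mul _).const_add _)
    fun x => hg.add ((hcont x).const_mul _)

lemma upperSemicontinuous_moreauEnv (hcont : ∀ y, Continuous fun x => D x y)
    (hbdd : ∀ x, BddBelow (Set.range fun y => g y + (1 / lam) * D x y)) :
    UpperSemicontinuous (moreauEnv D g lam) :=
  upperSemicontinuous_ciInf hbdd fun y =>
    (continuous_const.add ((hcont y).const_mul _)).upperSemicontinuous

end Measurability

lemma measurable_gradient {𝕜 F : Type*} [RCLike 𝕜] [NormedAddCommGroup F] [InnerProductSpace 𝕜 F]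
    [CompleteSpace F] [MeasurableSpace F] [BorelSpace F] (φ : F → 𝕜) : Measurable (gradient φ) :=
  (InnerProductSpace.toDual 𝕜 F).symm.continuous.measurable.comp (measurable_fderiv 𝕜 φ)

section Bregman

variable {d : ℕ} {ψ : EuclideanSpace ℝ (Fin d) → ℝ}

lemma bregmanDiv_self (x : EuclideanSpace ℝ (Fin d)) : bregmanDiv ψ x x = 0 := by
  simp only [bregmanDiv, sub_self, inner_zero_right]

lemma half_mul_dist_sq_le_bregmanDiv {ρ : ℝ} {x y : EuclideanSpace ℝ (Fin d)}
    (hsc : ψ y + ⟪gradient ψ y, x - y⟫ + ρ / 2 * ‖x - y‖ ^ 2 ≤ ψ x) :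
    ρ / 2 * dist x y ^ 2 ≤ bregmanDiv ψ x y := by
  rw [dist_eq_norm, bregmanDiv]
  linarith

lemma continuous_bregmanDiv_left (hψ : Continuous ψ) (y : EuclideanSpace ℝ (Fin d)) :
    Continuous fun x => bregmanDiv ψ x y := by
  unfold bregmanDiv
  fun_prop

lemma measurable_bregmanDiv_right (hψ : Measurable ψ) (x : EuclideanSpace ℝ (Fin d)) :
    Measurable (bregmanDiv ψ x) :=
  (hψ.const_sub _).sub ((measurable_gradient ψ).inner (measurable_id.const_sub x))

end Bregman

section ExpNeg

variable {α : Type*} [MeasurableSpace α] {μ : Measure α} {U V : α → ℝ}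

lemma lintegral_ofReal_exp_neg_anti (h : U ≤ᵐ[μ] V) :
    ∫⁻ x, ENNReal.ofReal (Real.exp (-V x)) ∂μ ≤ ∫⁻ x, ENNReal.ofReal (Real.exp (-U x)) ∂μ :=
  lintegral_mono_ae (h.mono fun _ hx => by gcongr)

lemma lintegral_ofReal_exp_neg_le_mul {c : ℝ} (h : ∀ᵐ x ∂μ, U x - c ≤ V x) :
    ∫⁻ x, ENNReal.ofReal (Real.exp (-V x)) ∂μ ≤
      ENNReal.ofReal (Real.exp c) * ∫⁻ x, ENNReal.ofReal (Real.exp (-U x)) ∂μ :=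
  calc ∫⁻ x, ENNReal.ofReal (Real.exp (-V x)) ∂μ
      ≤ ∫⁻ x, ENNReal.ofReal (Real.exp (-(U x - c))) ∂μ := lintegral_ofReal_exp_neg_anti h
    _ = ∫⁻ x, ENNReal.ofReal (Real.exp c) * ENNReal.ofReal (Real.exp (-U x)) ∂μ := by
        simp_rw [neg_sub, sub_eq_add_neg, Real.exp_add, ENNReal.ofReal_mul (Real.exp_nonneg _)]
    _ = ENNReal.ofReal (Real.exp c) * ∫⁻ x, ENNReal.ofReal (Real.exp (-U x)) ∂μ :=
        lintegral_const_mul' _ _ ENNReal.ofReal_ne_top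

lemma integrable_exp_neg_of_lintegral_lt_top (hU : AEMeasurable U μ)
    (hfin : ∫⁻ x, ENNReal.ofReal (Real.exp (-U x)) ∂μ < ∞) :
    Integrable (fun x => Real.exp (-U x)) μ :=
  (lintegral_ofReal_ne_top_iff_integrable (Real.measurable_exp.comp_aemeasurable
    hU.neg).aestronglyMeasurable (ae_of_all _ fun _ => Real.exp_nonneg _)).1 hfin.ne

end ExpNeg

theorem stmt2_general {d : ℕ} {μ : Measure (EuclideanSpace ℝ (Fin d))} {ρ : ℝ} (hρ : 0 < ρ)
    {ψ : EuclideanSpace ℝ (Fin d) → ℝ} (hdiff : Differentiable ℝ ψ)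
    (hsc : ∀ x y : EuclideanSpace ℝ (Fin d),
      ψ y + ⟪gradient ψ y, x - y⟫ + ρ / 2 * ‖x - y‖ ^ 2 ≤ ψ x)
    {L : ℝ≥0} {g : EuclideanSpace ℝ (Fin d) → ℝ} (hg : LipschitzWith L g)
    {f : EuclideanSpace ℝ (Fin d) → ℝ} (hf : AEMeasurable f μ) {lam : ℝ} (hlam : 0 < lam)
    {env : EuclideanSpace ℝ (Fin d) → ℝ} (henv : env = leftEnv ψ g lam ∨ env = rightEnv ψ g lam)
    (hfin : ∫⁻ x, ENNReal.ofReal (Real.exp (-(f x + g x))) ∂μ < ∞) :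
    ∫⁻ x, ENNReal.ofReal (Real.exp (-(f x + g x))) ∂μ ≤
        ∫⁻ x, ENNReal.ofReal (Real.exp (-(f x + env x))) ∂μ ∧
    ∫⁻ x, ENNReal.ofReal (Real.exp (-(f x + env x))) ∂μ ≤
        ENNReal.ofReal (Real.exp (lam * L ^ 2 / (2 * ρ))) *
          ∫⁻ x, ENNReal.ofReal (Real.exp (-(f x + g x))) ∂μ ∧
    ∫⁻ x, ENNReal.ofReal (Real.exp (-(f x + env x))) ∂μ < ∞ ∧
    Integrable (fun x => Real.exp (-(f x + env x))) μ := by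
  have hψ := hdiff.continuous
  have hquad (x y) := half_mul_dist_sq_le_bregmanDiv (hsc x y)
  obtain ⟨D, rfl, hself, hD, hmeas⟩ : ∃ D, env = moreauEnv D g lam ∧ (∀ x, D x x = 0) ∧
      (∀ x y, ρ / 2 * dist x y ^ 2 ≤ D x y) ∧ Measurable (moreauEnv D g lam) := by
    rcases henv with rfl | rfl
    · exact ⟨fun x y => bregmanDiv ψ y x, rfl, bregmanDiv_self,
        fun x y => dist_comm x y ▸ hquad y x,
        measurable_moreauEnv hg.continuous (measurable_bregmanDiv_right hψ.measurable)
          (continuous_bregmanDiv_left hψ)⟩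
    · exact ⟨bregmanDiv ψ, rfl, bregmanDiv_self, hquad,
        (upperSemicontinuous_moreauEnv (continuous_bregmanDiv_left hψ) fun x =>
          bddBelow_range_add_one_div_mul hρ hlam hg (hquad x)).measurable⟩
  have henv_le (x) : f x + moreauEnv D g lam x ≤ f x + g x := by
    gcongr
    exact moreauEnv_le_self (bddBelow_range_add_one_div_mul hρ hlam hg (hD x)) (hself x)
  have hle_env (x) : f x + g x - lam * L ^ 2 / (2 * ρ) ≤ f x + moreauEnv D g lam x := by
    rw [add_sub_assoc]
    gcongr
    exact sub_le_moreauEnv hρ hlam hg (hD x)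
  have hupper := lintegral_ofReal_exp_neg_le_mul (ae_of_all μ hle_env)
  have hlt := hupper.trans_lt (ENNReal.mul_lt_top ENNReal.ofReal_lt_top hfin)
  exact ⟨lintegral_ofReal_exp_neg_anti (ae_of_all μ henv_le), hupper, hlt,
    integrable_exp_neg_of_lintegral_lt_top (hf.add hmeas.aemeasurable) hlt⟩

/-- With `U = f + g` and `U_λ = f + env_{λ,g}^ψ` (left or right envelope), if
`0 < ∫ e^{−U} < ∞` then `∫ e^{−U} ≤ ∫ e^{−U_λ} ≤ e^{λL²/(2ρ)} ∫ e^{−U} < ∞`; in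
particular `e^{−U_λ}` is Lebesgue-integrable. -/
theorem stmt2 {d : ℕ} (ρ : ℝ) (hρ : 0 < ρ)
    (ψ : EuclideanSpace ℝ (Fin d) → ℝ)
    (hdiff : Differentiable ℝ ψ)
    (hsc : ∀ y ytil : EuclideanSpace ℝ (Fin d),
      ψ ytil + ⟪gradient ψ ytil, y - ytil⟫ + ρ / 2 * ‖y - ytil‖ ^ 2 ≤ ψ y)
    (L : ℝ) (hL : 0 ≤ L)
    (g : EuclideanSpace ℝ (Fin d) → ℝ)
    (hg : ∀ x y, |g x - g y| ≤ L * ‖x - y‖)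
    (f : EuclideanSpace ℝ (Fin d) → ℝ) (hf : Measurable f)
    (lam : ℝ) (hlam : 0 < lam)
    (env : EuclideanSpace ℝ (Fin d) → ℝ)
    (henv : env = leftEnv ψ g lam ∨ env = rightEnv ψ g lam)
    (hpos : 0 < ∫⁻ x, ENNReal.ofReal (Real.exp (-(f x + g x))))
    (hfin : (∫⁻ x, ENNReal.ofReal (Real.exp (-(f x + g x)))) < ∞) :
    (∫⁻ x, ENNReal.ofReal (Real.exp (-(f x + g x)))) ≤
        (∫⁻ x, ENNReal.ofReal (Real.exp (-(f x + env x)))) ∧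
    (∫⁻ x, ENNReal.ofReal (Real.exp (-(f x + env x)))) ≤
        ENNReal.ofReal (Real.exp (lam * L ^ 2 / (2 * ρ))) *
          ∫⁻ x, ENNReal.ofReal (Real.exp (-(f x + g x))) ∧
    (∫⁻ x, ENNReal.ofReal (Real.exp (-(f x + env x)))) < ∞ ∧
    Integrable (fun x => Real.exp (-(f x + env x))) := by
  lift L to ℝ≥0 using hL
  exact stmt2_general hρ hdiff hsc (.of_dist_le_mul fun x y => (dist_eq_norm x y).symm ▸ hg x y)
    hf.aemeasurable hlam henv hfin
end

section
/- Let U, U_λ : ℝ^d → ℝ ∪ {+∞} be measurable with U_λ(x) ≤ U(x) for all x, and suppose 0 < Z_U := ∫_{ℝ^d} e^{−U(x)} dx < ∞ and Z_λ := ∫_{ℝ^d} e^{−U_λ(x)} dx < ∞. Let π and π_λ be the probability measures on ℝ^d with Lebesgue densities e^{−U}/Z_U and e^{−U_λ}/Z_λ, respectively. Then ‖π_λ − π‖_TV ≤ 2·(1 − Z_U/Z_λ). -/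
open scoped ENNReal
open MeasureTheory

/-- `e^{-u}` for `u ∈ ℝ ∪ {±∞}`, valued in `ℝ≥0∞`. -/
noncomputable def expNeg (u : EReal) : ℝ≥0∞ :=
  if u = ⊤ then 0 else if u = ⊥ then ⊤ else ENNReal.ofReal (Real.exp (-u.toReal))

/-- The total variation distance `sup_{A Borel} |μ(A) − ν(A)|`. -/
noncomputable def tvDist {α : Type*} [MeasurableSpace α] (μ ν : Measure α) : ℝ :=
  ⨆ A : {A : Set α // MeasurableSet A}, |(μ A.1).toReal - (ν A.1).toReal|

/-!
Since `e^{-U} ≤ e^{-U_λ}`, dividing by the normalizing constants gives the minorization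
`(Z_U / Z_λ) π ≤ π_λ`. If probability measures satisfy `c μ ≤ ν`, then
`μ(A) - ν(A) ≤ (1 - c) μ(A) ≤ 1 - c` for every event `A`, and the same bound for `Aᶜ` controls
`ν(A) - μ(A)`. Hence `1 - Z_U / Z_λ` already bounds the total variation distance.
-/

theorem expNeg_eq_exp_neg (u : EReal) : expNeg u = EReal.exp (-u) := by
  induction u with
  | bot => simp [expNeg]
  | coe r => simp [expNeg, ← EReal.coe_neg]
  | top => simp [expNeg]

theorem antitone_expNeg : Antitone expNeg := fun u v huv => by
  simpa only [expNeg_eq_exp_neg] using EReal.exp_monotone (EReal.neg_le_neg_iff.2 huv)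

section TotalVariation

variable {α : Type*} [MeasurableSpace α]

theorem tvDist_nonneg (μ ν : Measure α) : 0 ≤ tvDist μ ν :=
  Real.iSup_nonneg fun _ => abs_nonneg _

variable {μ ν : Measure α}

theorem measureReal_sub_le_of_smul_le [IsProbabilityMeasure μ] [IsProbabilityMeasure ν]
    {c : ℝ≥0∞} (h : c • μ ≤ ν) (A : Set α) : μ.real A - ν.real A ≤ 1 - c.toReal := by
  have smul_real_le (s : Set α) : c.toReal * μ.real s ≤ ν.real s := by
    rw [← measureReal_ennreal_smul_apply]
    exact ENNReal.toReal_mono (measure_ne_top ν s) (h s)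
  have c_le_one : c.toReal ≤ 1 := by
    simpa only [probReal_univ, mul_one] using smul_real_le Set.univ
  calc μ.real A - ν.real A
      ≤ μ.real A - c.toReal * μ.real A := sub_le_sub_left (smul_real_le A) _
    _ = (1 - c.toReal) * μ.real A := by ring
    _ ≤ 1 - c.toReal := mul_le_of_le_one_right (sub_nonneg.2 c_le_one) measureReal_le_one

theorem tvDist_le_one_sub_of_smul_le [IsProbabilityMeasure μ] [IsProbabilityMeasure ν]
    {c : ℝ≥0∞} (h : c • μ ≤ ν) : tvDist ν μ ≤ 1 - c.toReal := by
  have : Nonempty {A : Set α // MeasurableSet A} := ⟨⟨∅, .empty⟩⟩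
  refine ciSup_le fun ⟨A, hA⟩ => abs_sub_le_iff.2 ⟨?_, measureReal_sub_le_of_smul_le h A⟩
  calc ν.real A - μ.real A
      = μ.real Aᶜ - ν.real Aᶜ := by
        rw [probReal_compl_eq_one_sub hA, probReal_compl_eq_one_sub hA]; ring
    _ ≤ 1 - c.toReal := measureReal_sub_le_of_smul_le h Aᶜ

end TotalVariation

section Density

variable {α : Type*} [MeasurableSpace α] {μ : Measure α} {f g : α → ℝ≥0∞}

theorem isProbabilityMeasure_withDensity_div_lintegral
    (hf₀ : ∫⁻ x, f x ∂μ ≠ 0) (hf : ∫⁻ x, f x ∂μ ≠ ∞) :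
    IsProbabilityMeasure (μ.withDensity fun x => f x / ∫⁻ y, f y ∂μ) := by
  refine ⟨?_⟩
  simp_rw [withDensity_apply _ MeasurableSet.univ, Measure.restrict_univ, div_eq_mul_inv]
  rw [lintegral_mul_const' _ _ (ENNReal.inv_ne_top.2 hf₀), ENNReal.mul_inv_cancel hf₀ hf]

theorem div_smul_withDensity_div_le {a b : ℝ≥0∞} (ha : a ≠ ∞) (hb : b ≠ 0) (hfg : f ≤ᵐ[μ] g) :
    (a / b) • μ.withDensity (fun x => f x / a) ≤ μ.withDensity fun x => g x / b := by
  rw [← withDensity_smul' _ _ (ENNReal.div_ne_top ha hb)]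
  refine withDensity_mono (hfg.mono fun x hx => ?_)
  calc a / b * (f x / a)
      = a / a * (f x / b) := by simp only [div_eq_mul_inv]; ring
    _ ≤ 1 * (g x / b) := by gcongr; exact ENNReal.div_self_le_one
    _ = g x / b := one_mul _

theorem tvDist_withDensity_div_lintegral_le (hfg : f ≤ᵐ[μ] g)
    (hf : ∫⁻ x, f x ∂μ ≠ 0) (hg : ∫⁻ x, g x ∂μ ≠ ∞) :
    tvDist (μ.withDensity fun x => g x / ∫⁻ y, g y ∂μ)
        (μ.withDensity fun x => f x / ∫⁻ y, f y ∂μ)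
      ≤ 1 - (∫⁻ x, f x ∂μ).toReal / (∫⁻ x, g x ∂μ).toReal := by
  have hle : ∫⁻ x, f x ∂μ ≤ ∫⁻ x, g x ∂μ := lintegral_mono_ae hfg
  have hf_top : ∫⁻ x, f x ∂μ ≠ ∞ := ne_top_of_le_ne_top hg hle
  have hg₀ : ∫⁻ x, g x ∂μ ≠ 0 := ne_bot_of_le_ne_bot hf hle
  have := isProbabilityMeasure_withDensity_div_lintegral hf hf_top
  have := isProbabilityMeasure_withDensity_div_lintegral hg₀ hg
  rw [← ENNReal.toReal_div]
  exact tvDist_le_one_sub_of_smul_le (div_smul_withDensity_div_le hf_top hg₀ hfg)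

end Density

theorem stmt3_general {α : Type*} [MeasurableSpace α] {μ : Measure α} (U Ulam : α → EReal)
    (hle : ∀ᵐ x ∂μ, Ulam x ≤ U x)
    (ZU Zlam : ℝ≥0∞)
    (hZU : ZU = ∫⁻ x, expNeg (U x) ∂μ)
    (hZlam : Zlam = ∫⁻ x, expNeg (Ulam x) ∂μ)
    (hZUpos : 0 < ZU) (hZlamfin : Zlam < ∞)
    (π πlam : Measure α)
    (hπ : π = μ.withDensity fun x => expNeg (U x) / ZU)
    (hπlam : πlam = μ.withDensity fun x => expNeg (Ulam x) / Zlam) :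
    tvDist πlam π ≤ 1 - ZU.toReal / Zlam.toReal := by
  subst hπ hπlam hZU hZlam
  exact tvDist_withDensity_div_lintegral_le (hle.mono fun _ hx => antitone_expNeg hx)
    hZUpos.ne' hZlamfin.ne

/-- If `U_λ ≤ U` pointwise and both normalizing constants are finite, then the
total variation distance between the associated Gibbs measures is at most
`2·(1 − Z_U/Z_λ)`. -/
theorem stmt3 {d : ℕ} (U Ulam : EuclideanSpace ℝ (Fin d) → EReal)
    (hU : Measurable U) (hUlam : Measurable Ulam)
    (hUbot : ∀ x, U x ≠ ⊥) (hUlambot : ∀ x, Ulam x ≠ ⊥)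
    (hle : ∀ x, Ulam x ≤ U x)
    (ZU Zlam : ℝ≥0∞)
    (hZU : ZU = ∫⁻ x, expNeg (U x))
    (hZlam : Zlam = ∫⁻ x, expNeg (Ulam x))
    (hZUpos : 0 < ZU) (hZUfin : ZU < ∞) (hZlamfin : Zlam < ∞)
    (π πlam : Measure (EuclideanSpace ℝ (Fin d)))
    (hπ : π = volume.withDensity fun x => expNeg (U x) / ZU)
    (hπlam : πlam = volume.withDensity fun x => expNeg (Ulam x) / Zlam) :
    tvDist πlam π ≤ 2 * (1 - ZU.toReal / Zlam.toReal) := by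
  linarith [tvDist_nonneg πlam π, stmt3_general U Ulam (.of_forall hle) ZU Zlam hZU hZlam
    hZUpos hZlamfin π πlam hπ hπlam]
end

section
/- Let ψ : ℝ^d → ℝ be twice continuously differentiable and strictly convex, let g : ℝ^d → ℝ ∪ {+∞} be proper, lower semicontinuous, and bounded below, and let λ > 0. Suppose that for each y ∈ ℝ^d the function y' ↦ g(y') + (1/λ)·D_ψ(y', y) attains its infimum at a unique point p(y) ∈ ℝ^d, and that the map p : ℝ^d → ℝ^d is continuous. Then the left Bregman–Moreau envelope env←_{λ,g}^ψ is continuously differentiable on ℝ^d with ∇env←_{λ,g}^ψ(y) = (1/λ) · ∇²ψ(y) · (y − p(y)) for every y ∈ ℝ^d. -/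
open scoped RealInnerProductSpace

/-- The left Bregman–Moreau envelope of an extended-real-valued `g` associated with `ψ`. -/
noncomputable def leftEnvE {d : ℕ} (ψ : EuclideanSpace ℝ (Fin d) → ℝ)
    (g : EuclideanSpace ℝ (Fin d) → EReal) (lam : ℝ)
    (x : EuclideanSpace ℝ (Fin d)) : EReal :=
  ⨅ y : EuclideanSpace ℝ (Fin d), (g y + ((1 / lam * bregmanDiv ψ y x : ℝ) : EReal))

/-!
With `c = 1 / λ`, write the envelope as `F y = Φ y y`, where `Φ z y = g (p z) + c * D_ψ (p z, y)` is
the objective at the point `p z`. Minimality gives `F ≤ Φ x` with equality at `x`, and also bounds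
`Φ x - F` by the absolute value of the mixed difference `Φ y y - Φ y x - (Φ x y - Φ x x)`. The terms
`g (p z)` cancel in this difference, and the four-point identity for Bregman divergences evaluates
it as `-c * (ψ' y - ψ' x) (p y - p x)`, a product of an `O(y - x)` and an `o(1)`. Hence `F` has the
same derivative at `x` as the differentiable function `Φ x`, namely `c * ψ'' x (x - p x)`.
-/

open Asymptotics Topology

theorem ereal_ne_top_of_add_coe_le {a b : EReal} {r s : ℝ} (h : a + r ≤ b + s) (hb : b ≠ ⊤) :
    a ≠ ⊤ := by
  rintro rfl
  rw [EReal.top_add_coe, top_le_iff] at h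
  exact EReal.add_ne_top hb (EReal.coe_ne_top s) h

section NontriviallyNormedField

variable {𝕜 E F G : Type*} [NontriviallyNormedField 𝕜] [NormedAddCommGroup E] [NormedSpace 𝕜 E]
  [NormedAddCommGroup F] [NormedSpace 𝕜 F] [NormedAddCommGroup G] [NormedSpace 𝕜 G]

theorem isLittleO_clm_apply_sub_sub {L : E → F →L[𝕜] G} {p : E → F} {x : E}
    (hL : DifferentiableAt 𝕜 L x) (hp : ContinuousAt p x) :
    (fun y => (L y - L x) (p y - p x)) =o[𝓝 x] fun y => y - x := by
  have hp' : (fun y => p y - p x) =o[𝓝 x] fun _ => (1 : ℝ) :=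
    (isLittleO_one_iff ℝ).2 (tendsto_sub_nhds_zero_iff.2 hp)
  have hprod : (fun y => ‖L y - L x‖ * ‖p y - p x‖) =o[𝓝 x] fun y => ‖y - x‖ * (1 : ℝ) :=
    hL.hasFDerivAt.isBigO_sub.norm_norm.mul_isLittleO hp'.norm_left
  simp only [mul_one] at hprod
  exact isBoundedBilinearMap_apply.isBigO_comp.trans_isLittleO hprod.of_norm_right

theorem differentiableAt_fderiv_of_contDiffAt_two {f : E → F} {x : E} (hf : ContDiffAt 𝕜 2 f x) :
    DifferentiableAt 𝕜 (fderiv 𝕜 f) x :=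
  (hf.fderiv_right (m := 1) one_add_one_eq_two.le).differentiableAt one_ne_zero

end NontriviallyNormedField

section NormedSpace

variable {E : Type*} [NormedAddCommGroup E] [NormedSpace ℝ E]

theorem hasFDerivAt_diag_of_forall_diag_le {Φ : E → E → ℝ} {Φ' : E →L[ℝ] ℝ} {x : E}
    (hmin : ∀ y z, Φ y y ≤ Φ z y) (hΦ : HasFDerivAt (Φ x) Φ' x)
    (hmixed : (fun y => Φ y y - Φ y x - (Φ x y - Φ x x)) =o[𝓝 x] fun y => y - x) :
    HasFDerivAt (fun y => Φ y y) Φ' x := by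
  have hgap_bound (y : E) : ‖Φ y y - Φ x y‖ ≤ ‖Φ y y - Φ y x - (Φ x y - Φ x x)‖ := by
    have hy : Φ y y ≤ Φ x y := hmin y x
    have hx : Φ x x ≤ Φ y x := hmin x y
    rw [Real.norm_of_nonpos (by linarith), Real.norm_of_nonpos (by linarith)]
    linarith
  have hgap : HasFDerivAt (fun y => Φ y y - Φ x y) (0 : E →L[ℝ] ℝ) x := by
    refine .of_isLittleO ?_
    simpa using (isBigO_of_le _ hgap_bound).trans_isLittleO hmixed
  simpa only [sub_add_cancel, zero_add] using hgap.fun_add hΦ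

/-- The Bregman divergence of `ψ` on a normed space. The derivative of `ψ` takes the place of the
gradient, so that no inner product is needed. -/
noncomputable def bregmanDivergence (ψ : E → ℝ) (x y : E) : ℝ :=
  ψ x - ψ y - fderiv ℝ ψ y (x - y)

/-- The left Bregman–Moreau envelope of `g` on a normed space, with the divergence weighted by a
real coefficient `c`; the envelope with parameter `λ` is the case `c = 1 / λ`. -/
noncomputable def leftBregmanEnvelope (ψ : E → ℝ) (g : E → EReal) (c : ℝ) (x : E) : EReal :=
  ⨅ y, g y + ((c * bregmanDivergence ψ y x : ℝ) : EReal)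

variable {ψ : E → ℝ}

theorem bregmanDivergence_four_point (a b x y : E) :
    bregmanDivergence ψ a y - bregmanDivergence ψ a x -
        (bregmanDivergence ψ b y - bregmanDivergence ψ b x) =
      -(fderiv ℝ ψ y - fderiv ℝ ψ x) (a - b) := by
  simp only [bregmanDivergence, sub_apply, map_sub]
  ring

theorem hasFDerivAt_bregmanDivergence_right {x : E} (hψ : ContDiffAt ℝ 2 ψ x) (z : E) :
    HasFDerivAt (bregmanDivergence ψ z) (fderiv ℝ (fderiv ℝ ψ) x (x - z)) x := by
  have hψ' : HasFDerivAt ψ (fderiv ℝ ψ x) x := (hψ.differentiableAt two_ne_zero).hasFDerivAt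
  have hψ'' := (differentiableAt_fderiv_of_contDiffAt_two hψ).hasFDerivAt
  have hsymm : IsSymmSndFDerivAt ℝ ψ x := hψ.isSymmSndFDerivAt (by simp)
  have hD := (hψ'.const_sub (ψ z)).sub (hψ''.clm_apply ((hasFDerivAt_id x).const_sub z))
  refine hD.congr_fderiv ?_
  ext v
  rw [hsymm.eq (x - z) v, ← neg_sub z x]
  simp

theorem hasFDerivAt_add_mul_bregmanDivergence {G : E → ℝ} {p : E → E} {c : ℝ} {x : E}
    (hψ : ContDiffAt ℝ 2 ψ x)
    (hmin : ∀ y z, G y + c * bregmanDivergence ψ (p y) y ≤ G z + c * bregmanDivergence ψ (p z) y)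
    (hp : ContinuousAt p x) :
    HasFDerivAt (fun y => G y + c * bregmanDivergence ψ (p y) y)
      (c • fderiv ℝ (fderiv ℝ ψ) x (x - p x)) x := by
  refine hasFDerivAt_diag_of_forall_diag_le
    (Φ := fun z y => G z + c * bregmanDivergence ψ (p z) y) hmin
    (((hasFDerivAt_bregmanDivergence_right hψ (p x)).const_mul c).const_add (G x)) ?_
  refine ((isLittleO_clm_apply_sub_sub (differentiableAt_fderiv_of_contDiffAt_two hψ)
    hp).const_mul_left (-c)).congr_left fun y => ?_
  linear_combination -c * bregmanDivergence_four_point (ψ := ψ) (p y) (p x) x y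

theorem leftBregmanEnvelope_eq_of_forall_le {g : E → EReal} {c : ℝ} {x q : E}
    (hq : ∀ y, g q + ((c * bregmanDivergence ψ q x : ℝ) : EReal) ≤
      g y + ((c * bregmanDivergence ψ y x : ℝ) : EReal)) :
    leftBregmanEnvelope ψ g c x = g q + ((c * bregmanDivergence ψ q x : ℝ) : EReal) :=
  le_antisymm (iInf_le _ q) (le_iInf hq)

theorem stmt9_general (hψ : ContDiff ℝ 2 ψ) {g : E → EReal} (hproper : ∃ x, g x ≠ ⊤)
    (hbot : ∀ x, g x ≠ ⊥) {c : ℝ} {p : E → E}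
    (hmin : ∀ y y', g (p y) + ((c * bregmanDivergence ψ (p y) y : ℝ) : EReal) ≤
      g y' + ((c * bregmanDivergence ψ y' y : ℝ) : EReal))
    (hp : Continuous p) :
    ContDiff ℝ 1 (fun y => (leftBregmanEnvelope ψ g c y).toReal) ∧
    ∀ y, HasFDerivAt (fun y' => (leftBregmanEnvelope ψ g c y').toReal)
      (c • fderiv ℝ (fderiv ℝ ψ) y (y - p y)) y := by
  obtain ⟨x₀, hx₀⟩ := hproper
  let G (z : E) : ℝ := (g (p z)).toReal
  have hobj (z y : E) : g (p z) + ((c * bregmanDivergence ψ (p z) y : ℝ) : EReal) =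
      ((G z + c * bregmanDivergence ψ (p z) y : ℝ) : EReal) := by
    have htop : g (p z) ≠ ⊤ := ereal_ne_top_of_add_coe_le (hmin z x₀) hx₀
    rw [EReal.coe_add, EReal.coe_toReal htop (hbot _)]
  have henv : (fun y => (leftBregmanEnvelope ψ g c y).toReal) =
      fun y => G y + c * bregmanDivergence ψ (p y) y := by
    ext y
    rw [leftBregmanEnvelope_eq_of_forall_le (hmin y), hobj, EReal.toReal_coe]
  have hG (y z : E) :
      G y + c * bregmanDivergence ψ (p y) y ≤ G z + c * bregmanDivergence ψ (p z) y := by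
    simpa only [hobj, EReal.coe_le_coe_iff] using hmin y (p z)
  have hderiv (y : E) := hasFDerivAt_add_mul_bregmanDivergence hψ.contDiffAt hG (x := y)
    hp.continuousAt
  have hcont : Continuous fun y => c • fderiv ℝ (fderiv ℝ ψ) y (y - p y) :=
    (((hψ.fderiv_right (m := 1) one_add_one_eq_two.le).continuous_fderiv one_ne_zero).clm_apply
      (continuous_id.sub hp)).const_smul c
  rw [henv]
  exact ⟨contDiff_one_iff_hasFDerivAt.2 ⟨_, hcont, hderiv⟩, hderiv⟩

end NormedSpace

section Gradient

theorem toDual_fderiv_gradient {H : Type*} [NormedAddCommGroup H] [InnerProductSpace ℝ H]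
    [CompleteSpace H] (f : H → ℝ) (x v : H) :
    InnerProductSpace.toDual ℝ H (fderiv ℝ (gradient f) x v) = fderiv ℝ (fderiv ℝ f) x v := by
  rw [← toDual_comp_gradient (f := f), LinearIsometryEquiv.comp_fderiv]
  rfl

variable {d : ℕ} (ψ : EuclideanSpace ℝ (Fin d) → ℝ)

theorem bregmanDiv_eq_bregmanDivergence : bregmanDiv ψ = bregmanDivergence ψ := by
  ext x y
  rw [bregmanDiv, bregmanDivergence, inner_gradient_left]

theorem leftEnvE_eq_leftBregmanEnvelope (g : EuclideanSpace ℝ (Fin d) → EReal) (lam : ℝ) :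
    leftEnvE ψ g lam = leftBregmanEnvelope ψ g (1 / lam) := by
  ext x
  rw [leftEnvE, leftBregmanEnvelope, bregmanDiv_eq_bregmanDivergence]

end Gradient

/-- If the left Bregman proximity operator `p` is single-valued and continuous, then
the left Bregman–Moreau envelope is continuously differentiable with
`∇env←_{λ,g}^ψ(y) = (1/λ)·∇²ψ(y)(y − p(y))`. -/
theorem stmt9 {d : ℕ} (ψ : EuclideanSpace ℝ (Fin d) → ℝ)
    (hψ : ContDiff ℝ 2 ψ) (hstrict : StrictConvexOn ℝ Set.univ ψ)
    (g : EuclideanSpace ℝ (Fin d) → EReal)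
    (hproper : ∃ x, g x ≠ ⊤)
    (hlsc : LowerSemicontinuous g)
    (hbdd : ∃ c : ℝ, ∀ x, (c : EReal) ≤ g x)
    (lam : ℝ) (hlam : 0 < lam)
    (p : EuclideanSpace ℝ (Fin d) → EuclideanSpace ℝ (Fin d))
    (hmin : ∀ y y', g (p y) + ((1 / lam * bregmanDiv ψ (p y) y : ℝ) : EReal) ≤
      g y' + ((1 / lam * bregmanDiv ψ y' y : ℝ) : EReal))
    (huniq : ∀ y y', g y' + ((1 / lam * bregmanDiv ψ y' y : ℝ) : EReal) =
      g (p y) + ((1 / lam * bregmanDiv ψ (p y) y : ℝ) : EReal) → y' = p y)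
    (hp : Continuous p) :
    ContDiff ℝ 1 (fun y => (leftEnvE ψ g lam y).toReal) ∧
    ∀ y : EuclideanSpace ℝ (Fin d),
      HasGradientAt (fun y' => (leftEnvE ψ g lam y').toReal)
        ((1 / lam) • (fderiv ℝ (gradient ψ) y (y - p y))) y := by
  obtain ⟨c, hc⟩ := hbdd
  simp only [leftEnvE_eq_leftBregmanEnvelope, bregmanDiv_eq_bregmanDivergence,
    hasGradientAt_iff_hasFDerivAt, map_smul, toDual_fderiv_gradient] at hmin ⊢
  exact stmt9_general hψ hproper (fun x => ne_bot_of_le_ne_bot (EReal.coe_ne_bot c) (hc x)) hmin hp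
end

section
/- Let σ > 0, α > 0, λ > 0, and let ψ_σ : ℝ → ℝ be the hyperbolic entropy ψ_σ(θ) := θ·arsinh(θ/σ) − √(θ² + σ²). For each θ ∈ ℝ, the function ϑ ↦ α|ϑ| + (1/λ)·D_{ψ_σ}(ϑ, θ) attains its infimum at the unique point: σ·sinh(arsinh(θ/σ) − αλ) if θ > σ·sinh(αλ); σ·sinh(arsinh(θ/σ) + αλ) if θ < −σ·sinh(αλ); and 0 if |θ| ≤ σ·sinh(αλ). -/
/-- The one-dimensional Bregman divergence associated with a differentiable `ψ : ℝ → ℝ`. -/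
noncomputable def bregmanDiv1 (ψ : ℝ → ℝ) (x y : ℝ) : ℝ :=
  ψ x - ψ y - deriv ψ y * (x - y)

/-- The hyperbolic entropy with parameter `σ > 0`. -/
noncomputable def hypEnt (σ θ : ℝ) : ℝ :=
  θ * Real.arsinh (θ / σ) - Real.sqrt (θ ^ 2 + σ ^ 2)

/-- The claimed minimizer of `ϑ ↦ α|ϑ| + (1/λ)·D_{ψ_σ}(ϑ, θ)`. -/
noncomputable def bregProxPt (σ α lam θ : ℝ) : ℝ :=
  if σ * Real.sinh (α * lam) < θ then σ * Real.sinh (Real.arsinh (θ / σ) - α * lam)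
  else if θ < -(σ * Real.sinh (α * lam)) then σ * Real.sinh (Real.arsinh (θ / σ) + α * lam)
  else 0

/-!
By the three-point identity, a point `p` such that `ψ'(y) - ψ'(p)` is a subgradient of `λ f` at `p`
is the strict minimizer of `f + (1/λ) D_ψ(·, y)` as soon as `ψ` is strictly convex.  For `f = α |·|`
and a mirror map `ψ'` preserving signs, this subgradient condition says that `ψ'(p)` is obtained
from `ψ'(y)` by soft thresholding at level `αλ`.  The mirror map of the hyperbolic entropy is
`arsinh (· / σ)`, with inverse `σ sinh`, so that `p = σ sinh (softThreshold (αλ) (arsinh (θ/σ)))`.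
-/

section BregmanDivergence

variable {ψ : ℝ → ℝ} {s : Set ℝ} {p x : ℝ}

theorem bregmanDiv1_three_point (ψ : ℝ → ℝ) (x p y : ℝ) :
    bregmanDiv1 ψ x y =
      bregmanDiv1 ψ x p + bregmanDiv1 ψ p y - (deriv ψ y - deriv ψ p) * (x - p) := by
  simp only [bregmanDiv1]
  ring

theorem bregmanDiv1_pos (hψ : StrictConvexOn ℝ s ψ) (hx : x ∈ s) (hp : p ∈ s)
    (hd : DifferentiableAt ℝ ψ p) (hxp : x ≠ p) : 0 < bregmanDiv1 ψ x p := by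
  unfold bregmanDiv1
  rcases hxp.lt_or_gt with hlt | hgt
  · have hslope := hψ.slope_lt_deriv hx hp hlt hd
    rw [slope_def_field, div_lt_iff₀ (sub_pos.2 hlt)] at hslope
    linarith
  · have hslope := hψ.deriv_lt_slope hp hx hgt hd
    rw [slope_def_field, lt_div_iff₀ (sub_pos.2 hgt)] at hslope
    linarith

theorem add_bregmanDiv1_lt_of_subgradient {f : ℝ → ℝ} {lam y : ℝ} (hψ : StrictConvexOn ℝ s ψ)
    (hlam : 0 < lam) (hx : x ∈ s) (hp : p ∈ s) (hd : DifferentiableAt ℝ ψ p) (hxp : x ≠ p)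
    (hsub : (deriv ψ y - deriv ψ p) * (x - p) ≤ lam * (f x - f p)) :
    f p + (1 / lam) * bregmanDiv1 ψ p y < f x + (1 / lam) * bregmanDiv1 ψ x y := by
  have hpos : 0 < bregmanDiv1 ψ x p := bregmanDiv1_pos hψ hx hp hd hxp
  have hscaled : lam * f p + bregmanDiv1 ψ p y < lam * f x + bregmanDiv1 ψ x y := by
    rw [bregmanDiv1_three_point ψ x p y]
    linarith
  refine lt_of_mul_lt_mul_left ?_ hlam.le
  simpa only [mul_add, ← mul_assoc, mul_one_div_cancel hlam.ne', one_mul] using hscaled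

end BregmanDivergence

/-- The soft-thresholding operator at level `c`, that is, the Euclidean proximity operator of
`c * |·|` when `0 ≤ c`; for negative `c` the value is not meaningful. -/
def softThreshold {G : Type*} [AddGroup G] [LinearOrder G] (c u : G) : G :=
  if c < u then u - c else if u < -c then u + c else 0

theorem abs_sub_softThreshold_le {G : Type*} [AddCommGroup G] [LinearOrder G]
    [IsOrderedAddMonoid G] {c : G} (hc : 0 ≤ c) (u : G) : |u - softThreshold c u| ≤ c := by
  unfold softThreshold
  split_ifs with hgt hlt
  · rw [sub_sub_cancel, abs_of_nonneg hc]
  · rw [sub_add_cancel_left, abs_neg, abs_of_nonneg hc]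
  · rw [sub_zero]
    exact abs_le.2 ⟨not_lt.1 hlt, not_lt.1 hgt⟩

section SubgradientOfAbs

variable {R : Type*} [Ring R] [LinearOrder R] [IsStrictOrderedRing R] {c u p : R}

theorem sub_softThreshold_mul_eq (hp : SignType.sign p = SignType.sign (softThreshold c u)) :
    (u - softThreshold c u) * p = c * |p| := by
  unfold softThreshold at hp ⊢
  split_ifs at hp ⊢ with hgt hlt
  · rw [sign_pos (sub_pos.2 hgt), sign_eq_one_iff] at hp
    rw [sub_sub_cancel, abs_of_pos hp]
  · rw [sign_neg (lt_neg_iff_add_neg.1 hlt), sign_eq_neg_one_iff] at hp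
    rw [sub_add_cancel_left, abs_of_neg hp, neg_mul_comm]
  · rw [sign_zero, sign_eq_zero_iff] at hp
    rw [hp, abs_zero, mul_zero, mul_zero]

theorem sub_softThreshold_mul_sub_le (hc : 0 ≤ c)
    (hp : SignType.sign p = SignType.sign (softThreshold c u)) (x : R) :
    (u - softThreshold c u) * (x - p) ≤ c * (|x| - |p|) :=
  calc (u - softThreshold c u) * (x - p)
      = (u - softThreshold c u) * x - c * |p| := by rw [mul_sub, sub_softThreshold_mul_eq hp]
    _ ≤ |u - softThreshold c u| * |x| - c * |p| := by
        rw [← abs_mul]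
        gcongr
        exact le_abs_self _
    _ ≤ c * |x| - c * |p| := by
        gcongr
        exact abs_sub_softThreshold_le hc u
    _ = c * (|x| - |p|) := (mul_sub _ _ _).symm

end SubgradientOfAbs

theorem add_bregmanDiv1_lt_of_deriv_eq_softThreshold {ψ : ℝ → ℝ} {s : Set ℝ} {α lam p x y : ℝ}
    (hψ : StrictConvexOn ℝ s ψ) (hα : 0 ≤ α) (hlam : 0 < lam) (hx : x ∈ s) (hp : p ∈ s)
    (hd : DifferentiableAt ℝ ψ p) (hsign : SignType.sign p = SignType.sign (deriv ψ p))
    (hsoft : deriv ψ p = softThreshold (α * lam) (deriv ψ y)) (hxp : x ≠ p) :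
    α * |p| + (1 / lam) * bregmanDiv1 ψ p y < α * |x| + (1 / lam) * bregmanDiv1 ψ x y := by
  refine add_bregmanDiv1_lt_of_subgradient (f := fun z => α * |z|) hψ hlam hx hp hd hxp ?_
  calc (deriv ψ y - deriv ψ p) * (x - p)
      ≤ α * lam * (|x| - |p|) := by
        rw [hsoft] at hsign ⊢
        exact sub_softThreshold_mul_sub_le (mul_nonneg hα hlam.le) hsign x
    _ = lam * (α * |x| - α * |p|) := by ring

section HyperbolicEntropy

variable {σ : ℝ}

theorem sqrt_sq_add_sq_eq_mul_sqrt (hσ : 0 < σ) (θ : ℝ) :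
    √(θ ^ 2 + σ ^ 2) = σ * √(1 + (θ / σ) ^ 2) := by
  have hfactor : θ ^ 2 + σ ^ 2 = σ ^ 2 * (1 + (θ / σ) ^ 2) := by
    field_simp
    ring
  rw [hfactor, Real.sqrt_mul (sq_nonneg σ), Real.sqrt_sq hσ.le]

theorem hasDerivAt_hypEnt (hσ : 0 < σ) (θ : ℝ) :
    HasDerivAt (hypEnt σ) (Real.arsinh (θ / σ)) θ := by
  have hpos : 0 < θ ^ 2 + σ ^ 2 := by positivity
  have hmul := (hasDerivAt_id θ).mul ((hasDerivAt_id θ).div_const σ).arsinh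
  have hsqrt := (((hasDerivAt_id θ).pow 2).add_const (σ ^ 2)).sqrt hpos.ne'
  refine (hmul.sub hsqrt).congr_deriv ?_
  simp only [id, Pi.pow_apply, smul_eq_mul, sqrt_sq_add_sq_eq_mul_sqrt hσ]
  field_simp
  ring

theorem deriv_hypEnt (hσ : 0 < σ) (θ : ℝ) : deriv (hypEnt σ) θ = Real.arsinh (θ / σ) :=
  (hasDerivAt_hypEnt hσ θ).deriv

theorem strictConvexOn_hypEnt (hσ : 0 < σ) : StrictConvexOn ℝ Set.univ (hypEnt σ) := by
  refine StrictMono.strictConvexOn_univ_of_deriv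
    (continuous_iff_continuousAt.2 fun θ => (hasDerivAt_hypEnt hσ θ).continuousAt) ?_
  rw [funext (deriv_hypEnt hσ)]
  exact Real.arsinh_strictMono.comp fun _ _ h => div_lt_div_of_pos_right h hσ

theorem sign_deriv_hypEnt (hσ : 0 < σ) (θ : ℝ) :
    SignType.sign (deriv (hypEnt σ) θ) = SignType.sign θ := by
  simp only [deriv_hypEnt hσ, sign_apply, Real.arsinh_pos_iff, Real.arsinh_neg_iff,
    div_pos_iff_of_pos_right hσ, div_lt_iff₀ hσ, zero_mul]

theorem mul_sinh_lt_iff (hσ : 0 < σ) {c θ : ℝ} :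
    σ * Real.sinh c < θ ↔ c < Real.arsinh (θ / σ) := by
  rw [← Real.sinh_lt_sinh (x := c), Real.sinh_arsinh, lt_div_iff₀' hσ]

theorem lt_mul_sinh_iff (hσ : 0 < σ) {c θ : ℝ} :
    θ < σ * Real.sinh c ↔ Real.arsinh (θ / σ) < c := by
  rw [← Real.sinh_lt_sinh (y := c), Real.sinh_arsinh, div_lt_iff₀' hσ]

theorem bregProxPt_eq_mul_sinh_softThreshold (hσ : 0 < σ) (α lam θ : ℝ) :
    bregProxPt σ α lam θ =
      σ * Real.sinh (softThreshold (α * lam) (Real.arsinh (θ / σ))) := by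
  simp only [bregProxPt, softThreshold, ← mul_neg, ← Real.sinh_neg, mul_sinh_lt_iff hσ,
    lt_mul_sinh_iff hσ]
  split_ifs
  · rfl
  · rfl
  · rw [Real.sinh_zero, mul_zero]

theorem deriv_hypEnt_bregProxPt (hσ : 0 < σ) (α lam θ : ℝ) :
    deriv (hypEnt σ) (bregProxPt σ α lam θ) =
      softThreshold (α * lam) (deriv (hypEnt σ) θ) := by
  rw [deriv_hypEnt hσ, deriv_hypEnt hσ, bregProxPt_eq_mul_sinh_softThreshold hσ,
    mul_div_cancel_left₀ _ hσ.ne', Real.arsinh_sinh]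

end HyperbolicEntropy

/-- The left Bregman proximity operator of `α|·|` associated with the hyperbolic
entropy `ψ_σ`: the function `ϑ ↦ α|ϑ| + (1/λ)·D_{ψ_σ}(ϑ, θ)` attains its infimum at
the unique point given by the explicit formula `bregProxPt`. -/
theorem stmt11 (σ α lam : ℝ) (hσ : 0 < σ) (hα : 0 < α) (hlam : 0 < lam) :
    ∀ θ : ℝ,
      (∀ ϑ : ℝ,
        α * |bregProxPt σ α lam θ| +
            (1 / lam) * bregmanDiv1 (hypEnt σ) (bregProxPt σ α lam θ) θ ≤
          α * |ϑ| + (1 / lam) * bregmanDiv1 (hypEnt σ) ϑ θ) ∧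
      (∀ ϑ : ℝ,
        (∀ ϑ' : ℝ, α * |ϑ| + (1 / lam) * bregmanDiv1 (hypEnt σ) ϑ θ ≤
          α * |ϑ'| + (1 / lam) * bregmanDiv1 (hypEnt σ) ϑ' θ) →
        ϑ = bregProxPt σ α lam θ) := by
  intro θ
  have hlt : ∀ ϑ ≠ bregProxPt σ α lam θ,
      α * |bregProxPt σ α lam θ| +
          (1 / lam) * bregmanDiv1 (hypEnt σ) (bregProxPt σ α lam θ) θ <
        α * |ϑ| + (1 / lam) * bregmanDiv1 (hypEnt σ) ϑ θ := fun ϑ hne =>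
    add_bregmanDiv1_lt_of_deriv_eq_softThreshold (strictConvexOn_hypEnt hσ) hα.le hlam
      (Set.mem_univ _) (Set.mem_univ _) (hasDerivAt_hypEnt hσ _).differentiableAt
      (sign_deriv_hypEnt hσ _).symm (deriv_hypEnt_bregProxPt hσ α lam θ) hne
  refine ⟨fun ϑ => ?_, fun ϑ hmin => ?_⟩
  · rcases eq_or_ne ϑ (bregProxPt σ α lam θ) with rfl | hne
    · exact le_rfl
    · exact (hlt ϑ hne).le
  · by_contra hne
    exact (hlt ϑ hne).not_ge (hmin _)
end
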